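/- arXiv:2508.07400 — 2 statements merged into one kernel-verified Lean document; each statement's English description precedes it below -/
import Mathlib

section
/- Let π be a positive policy, and let ν : {0,…,H} × S → ℝ satisfy ν_H(s) = 0 for all s ∈ S. If r' is any time-varying reward whose soft-optimal policy equals π and whose soft value functions satisfy V_t(s) = ν_t(s) for all 0 ≤ t ≤ H−1 and all s ∈ S, then necessarily r'_t(s,a) = log π_t(a|s) − γ · Σ_{s'∈S} T(s'|s,a) ν_{t+1}(s') + ν_t(s) for all t ∈ {0,…,H−1}, s ∈ S, a ∈ A. (Uniqueness part of Lemma 1: this is the only reward for which π is soft-optimal with value functions ν.) -/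
/-- Soft Q-function computed backward in time, indexed by the number of steps
remaining before the final time `H - 1`: `Qaux T γ H r k` is the soft
Q-function at time `t = H - 1 - k`. -/
noncomputable def Qaux {S A : Type*} [Fintype S] [Fintype A]
    (T : S → A → S → ℝ) (γ : ℝ) (H : ℕ) (r : ℕ → S → A → ℝ) : ℕ → S → A → ℝ
  | 0 => fun s a => r (H - 1) s a
  | (k + 1) => fun s a => r (H - 1 - (k + 1)) s a +
      γ * ∑ s' : S, T s a s' *
        Real.log (∑ a' : A, Real.exp (Qaux T γ H r k s' a'))

/-- The soft Q-function at time `t` (meaningful for `t ≤ H - 1`). -/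
noncomputable def softQ {S A : Type*} [Fintype S] [Fintype A]
    (T : S → A → S → ℝ) (γ : ℝ) (H : ℕ) (r : ℕ → S → A → ℝ)
    (t : ℕ) : S → A → ℝ :=
  Qaux T γ H r (H - 1 - t)

/-- The soft value function `V_t(s) = log Σ_a exp Q_t(s,a)`. -/
noncomputable def softV {S A : Type*} [Fintype S] [Fintype A]
    (T : S → A → S → ℝ) (γ : ℝ) (H : ℕ) (r : ℕ → S → A → ℝ)
    (t : ℕ) (s : S) : ℝ :=
  Real.log (∑ a : A, Real.exp (softQ T γ H r t s a))

/-- The soft-optimal (maximum-entropy) policy of the reward `r`. -/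
noncomputable def softPolicy {S A : Type*} [Fintype S] [Fintype A]
    (T : S → A → S → ℝ) (γ : ℝ) (H : ℕ) (r : ℕ → S → A → ℝ)
    (t : ℕ) (s : S) (a : A) : ℝ :=
  Real.exp (softQ T γ H r t s a) / ∑ a' : A, Real.exp (softQ T γ H r t s a')

theorem log_exp_div_sum_exp {ι : Type*} [Fintype ι] (f : ι → ℝ) (i : ι) :
    Real.log (Real.exp (f i) / ∑ j, Real.exp (f j)) =
      f i - Real.log (∑ j, Real.exp (f j)) := by
  have hsum : 0 < ∑ j, Real.exp (f j) :=
    Finset.sum_pos (fun j _ ↦ Real.exp_pos (f j)) ⟨i, Finset.mem_univ i⟩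
  rw [Real.log_div (Real.exp_ne_zero _) hsum.ne', Real.log_exp]

section SoftBellman

variable {S A : Type*} [Fintype S] [Fintype A] (T : S → A → S → ℝ) (γ : ℝ)

theorem log_softPolicy (H : ℕ) (r : ℕ → S → A → ℝ) (t : ℕ) (s : S) (a : A) :
    Real.log (softPolicy T γ H r t s a) = softQ T γ H r t s a - softV T γ H r t s :=
  log_exp_div_sum_exp (softQ T γ H r t s) a

theorem softQ_last (n : ℕ) (r : ℕ → S → A → ℝ) :
    softQ T γ (n + 1) r n = r n := by
  simp only [softQ, Nat.add_sub_cancel, Nat.sub_self, Qaux]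

theorem softQ_of_succ_lt {H t : ℕ} (ht : t + 1 < H) (r : ℕ → S → A → ℝ) (s : S) (a : A) :
    softQ T γ H r t s a =
      r t s a + γ * ∑ s', T s a s' * softV T γ H r (t + 1) s' := by
  have hsteps : H - 1 - t = H - 1 - (t + 1) + 1 := by lia
  have htime : H - 1 - (H - 1 - (t + 1) + 1) = t := by lia
  simp only [softV, softQ, hsteps, Qaux, htime]

/- The value at time `H` is prescribed through `ν` because `softV T γ H r H` is a junk value:
truncated subtraction makes it `softV T γ H r (H - 1)` rather than `0`. -/
theorem softQ_eq_reward_add_of_softV_eq {H : ℕ} {r : ℕ → S → A → ℝ} {ν : ℕ → S → ℝ}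
    (hνH : ∀ s, ν H s = 0) (hval : ∀ t < H, ∀ s, softV T γ H r t s = ν t s)
    {t : ℕ} (ht : t < H) (s : S) (a : A) :
    softQ T γ H r t s a = r t s a + γ * ∑ s', T s a s' * ν (t + 1) s' := by
  obtain hlt | rfl : t + 1 < H ∨ t + 1 = H := Nat.lt_or_eq_of_le ht
  · simp only [softQ_of_succ_lt T γ hlt, hval (t + 1) hlt]
  · simp only [softQ_last, hνH, mul_zero, Finset.sum_const_zero, add_zero]

theorem stmt1_general {H : ℕ} {π : ℕ → S → A → ℝ} {ν : ℕ → S → ℝ} {r : ℕ → S → A → ℝ}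
    (hνH : ∀ s, ν H s = 0)
    (hind : ∀ t < H, ∀ s a, softPolicy T γ H r t s a = π t s a)
    (hval : ∀ t < H, ∀ s, softV T γ H r t s = ν t s) :
    ∀ t < H, ∀ s a,
      r t s a = Real.log (π t s a) - γ * (∑ s', T s a s' * ν (t + 1) s') + ν t s := by
  intro t ht s a
  have hlog : Real.log (π t s a) = softQ T γ H r t s a - ν t s := by
    rw [← hind t ht, ← hval t ht, log_softPolicy]
  have hbellman := softQ_eq_reward_add_of_softV_eq T γ hνH hval ht s a
  linarith

end SoftBellman

/-- uniqueness part of Lemma 1: if the soft-optimal policy of `r'`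
equals `π` and its soft value functions equal `ν` on `{0,…,H−1}`, with `ν_H ≡ 0`,
then `r'_t(s,a) = log π_t(a|s) − γ Σ_{s'} T(s'|s,a) ν_{t+1}(s') + ν_t(s)`. -/
theorem stmt1 {S A : Type*} [Fintype S] [Fintype A] [Nonempty S] [Nonempty A]
    (T : S → A → S → ℝ) (γ : ℝ) (H : ℕ)
    (hT : ∀ s a s', 0 ≤ T s a s') (hTsum : ∀ s a, ∑ s' : S, T s a s' = 1)
    (hγ0 : 0 ≤ γ) (hγ1 : γ ≤ 1) (hH : 1 ≤ H)
    (π : ℕ → S → A → ℝ)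
    (hπpos : ∀ t < H, ∀ s a, 0 < π t s a)
    (hπsum : ∀ t < H, ∀ s, ∑ a : A, π t s a = 1)
    (ν : ℕ → S → ℝ) (hνH : ∀ s, ν H s = 0)
    (r' : ℕ → S → A → ℝ)
    (hind : ∀ t < H, ∀ s a, softPolicy T γ H r' t s a = π t s a)
    (hval : ∀ t < H, ∀ s, softV T γ H r' t s = ν t s) :
    ∀ t < H, ∀ s a,
      r' t s a = Real.log (π t s a)
        - γ * (∑ s' : S, T s a s' * ν (t + 1) s') + ν t s :=
  stmt1_general T γ hνH hind hval
end

section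
/- Let π be a positive policy. The map sending ν to the reward r defined by r_t(s,a) = log π_t(a|s) − γ · Σ_{s'∈S} T(s'|s,a) ν_{t+1}(s') + ν_t(s) is injective on the set of ν : {0,…,H} × S → ℝ with ν_H ≡ 0: if ν and ν' both vanish at time H and produce the same reward (r_t(s,a) = r'_t(s,a) for all t, s, a), then ν_t(s) = ν'_t(s) for all t ≤ H and s ∈ S. Consequently, the set of time-varying rewards whose soft-optimal policy equals π is infinite. -/
/-
A potential `ν` vanishing at time `H` is, by backward induction, exactly the soft value function of
the reward it produces: if `V_{t+1} = ν_{t+1}`, the term `-γ Σ T ν_{t+1}` cancels the expected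
continuation value, so `Q_t = log π_t + ν_t`, whence `V_t = ν_t` and the soft-optimal policy is `π`.
Backward induction also recovers `ν` from the reward. Constant potentials concentrated at time `0`
then yield infinitely many rewards with soft-optimal policy `π`.
-/

section LogSumExp

variable {ι : Type*} {p : ι → ℝ}

theorem sum_exp_log_add {s : Finset ι} (hp : ∀ i ∈ s, 0 < p i) (c : ℝ) :
    ∑ i ∈ s, Real.exp (Real.log (p i) + c) = (∑ i ∈ s, p i) * Real.exp c := by
  rw [Finset.sum_mul]
  exact Finset.sum_congr rfl fun i hi => by rw [Real.exp_add, Real.exp_log (hp i hi)]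

theorem log_sum_exp_log_add [Fintype ι] (hp : ∀ i, 0 < p i) (hsum : ∑ i, p i = 1) (c : ℝ) :
    Real.log (∑ i, Real.exp (Real.log (p i) + c)) = c := by
  rw [sum_exp_log_add fun i _ => hp i, hsum, one_mul, Real.log_exp]

theorem exp_log_add_div_sum [Fintype ι] (hp : ∀ i, 0 < p i) (c : ℝ) (i : ι) :
    Real.exp (Real.log (p i) + c) / ∑ j, Real.exp (Real.log (p j) + c) = p i / ∑ j, p j := by
  rw [sum_exp_log_add fun j _ => hp j, Real.exp_add, Real.exp_log (hp i),
    mul_div_mul_right _ _ (Real.exp_ne_zero c)]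

end LogSumExp

section SoftBellman

variable {S A : Type*} [Fintype S] [Fintype A] {T : S → A → S → ℝ} {γ : ℝ} {H t : ℕ}
  {r : ℕ → S → A → ℝ} {s : S} {a : A}

theorem softQ_of_succ_eq_horizon (ht : t + 1 = H) : softQ T γ H r t s a = r t s a := by
  subst ht
  simp only [softQ, Nat.add_sub_cancel, Nat.sub_self, Qaux]

theorem softQ_eq_add_softV_succ (ht : t + 1 < H) :
    softQ T γ H r t s a = r t s a + γ * ∑ s', T s a s' * softV T γ H r (t + 1) s' := by
  have h_steps : H - 1 - t = H - 1 - (t + 1) + 1 := by omega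
  have h_time : H - 1 - (H - 1 - (t + 1) + 1) = t := by omega
  simp only [softV, softQ, h_steps, Qaux, h_time]

end SoftBellman

/-- The reward obtained from `log π` by potential-based shaping with potential `ν`, i.e. the image
of `ν` under the map of the theorem. -/
noncomputable def shapedReward {S A : Type*} [Fintype S] (T : S → A → S → ℝ) (γ : ℝ)
    (π : ℕ → S → A → ℝ) (ν : ℕ → S → ℝ) (t : ℕ) (s : S) (a : A) : ℝ :=
  Real.log (π t s a) - γ * (∑ s', T s a s' * ν (t + 1) s') + ν t s

section ShapedReward

variable {S A : Type*} [Fintype S] {T : S → A → S → ℝ} {γ : ℝ} {H t : ℕ} {π : ℕ → S → A → ℝ}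
  {ν : ℕ → S → ℝ}

theorem eq_of_shapedReward_eq [Nonempty A] {ν' : ℕ → S → ℝ} (hν : ν H = ν' H)
    (hr : ∀ t < H, ∀ s a, shapedReward T γ π ν t s a = shapedReward T γ π ν' t s a)
    (ht : t ≤ H) : ν t = ν' t := by
  induction ht using Nat.decreasingInduction with
  | self => exact hν
  | of_succ t ht ih =>
    funext s
    obtain ⟨a⟩ := ‹Nonempty A›
    simpa only [shapedReward, ih, add_right_inj] using hr t ht s a

theorem softQ_shapedReward [Fintype A] (hπpos : ∀ t < H, ∀ s a, 0 < π t s a)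
    (hπsum : ∀ t < H, ∀ s, ∑ a, π t s a = 1) (hν : ν H = 0) (ht : t < H) (s : S) (a : A) :
    softQ T γ H (shapedReward T γ π ν) t s a = Real.log (π t s a) + ν t s := by
  induction ht.le using Nat.decreasingInduction generalizing s a with
  | self => exact absurd ht (lt_irrefl H)
  | of_succ t _ ih =>
    obtain h_last | h_lt : t + 1 = H ∨ t + 1 < H := by omega
    · rw [softQ_of_succ_eq_horizon h_last, shapedReward, h_last]
      simp only [hν, Pi.zero_apply, mul_zero, Finset.sum_const_zero, sub_zero]
    · have h_softV (s' : S) : softV T γ H (shapedReward T γ π ν) (t + 1) s' = ν (t + 1) s' := by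
        simp only [softV, ih h_lt, log_sum_exp_log_add (hπpos _ h_lt s') (hπsum _ h_lt s')]
      rw [softQ_eq_add_softV_succ h_lt, shapedReward]
      simp only [h_softV]
      ring

theorem softPolicy_shapedReward [Fintype A] (hπpos : ∀ t < H, ∀ s a, 0 < π t s a)
    (hπsum : ∀ t < H, ∀ s, ∑ a, π t s a = 1) (hν : ν H = 0) (ht : t < H) (s : S) (a : A) :
    softPolicy T γ H (shapedReward T γ π ν) t s a = π t s a := by
  simp only [softPolicy, softQ_shapedReward hπpos hπsum hν ht]
  rw [exp_log_add_div_sum (hπpos t ht s), hπsum t ht s, div_one]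

end ShapedReward

theorem infinite_rewards_softPolicy_eq {S A : Type*} [Fintype S] [Fintype A] [Nonempty S]
    [Nonempty A] {T : S → A → S → ℝ} {γ : ℝ} {H : ℕ} (hH : 1 ≤ H) {π : ℕ → S → A → ℝ}
    (hπpos : ∀ t < H, ∀ s a, 0 < π t s a) (hπsum : ∀ t < H, ∀ s, ∑ a, π t s a = 1) :
    Set.Infinite
      ((fun r : ℕ → S → A → ℝ => fun t : Fin H => r t) ''
        {r | ∀ t < H, ∀ s a, softPolicy T γ H r t s a = π t s a}) := by
  let ν (c : ℝ) : ℕ → S → ℝ := Pi.single 0 (Function.const S c)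
  have hν (c : ℝ) : ν c H = 0 := Pi.single_eq_of_ne (by omega) _
  have h_inj : Function.Injective fun (c : ℝ) (t : Fin H) => shapedReward T γ π (ν c) t := by
    intro c c' h_reward
    have h_init : ν c 0 = ν c' 0 :=
      eq_of_shapedReward_eq ((hν c).trans (hν c').symm)
        (fun t ht => congrFun₂ (congrFun h_reward ⟨t, ht⟩)) (Nat.zero_le H)
    exact Function.const_injective (by simpa only [ν, Pi.single_eq_same] using h_init)
  exact Set.infinite_of_injective_forall_mem h_inj fun c =>
    ⟨shapedReward T γ π (ν c), fun _ => softPolicy_shapedReward hπpos hπsum (hν c), rfl⟩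

theorem stmt4_general {S A : Type*} [Fintype S] [Fintype A] [Nonempty S] [Nonempty A]
    (T : S → A → S → ℝ) (γ : ℝ) (H : ℕ) (hH : 1 ≤ H) (π : ℕ → S → A → ℝ)
    (hπpos : ∀ t < H, ∀ s a, 0 < π t s a)
    (hπsum : ∀ t < H, ∀ s, ∑ a : A, π t s a = 1) :
    (∀ ν ν' : ℕ → S → ℝ, (∀ s, ν H s = 0) → (∀ s, ν' H s = 0) →
      (∀ t < H, ∀ s a,
        Real.log (π t s a) - γ * (∑ s' : S, T s a s' * ν (t + 1) s') + ν t s =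
        Real.log (π t s a) - γ * (∑ s' : S, T s a s' * ν' (t + 1) s') + ν' t s) →
      ∀ t ≤ H, ∀ s, ν t s = ν' t s) ∧
    Set.Infinite
      ((fun r : ℕ → S → A → ℝ => fun t : Fin H => r t) ''
        {r | ∀ t < H, ∀ s a, softPolicy T γ H r t s a = π t s a}) := by
  refine ⟨fun ν ν' hν hν' h_reward t ht => ?_, infinite_rewards_softPolicy_eq hH hπpos hπsum⟩
  have h_final : ν H = ν' H := funext fun s => (hν s).trans (hν' s).symm
  exact congrFun (eq_of_shapedReward_eq h_final h_reward ht)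

/-- the map `ν ↦ r` with
`r_t(s,a) = log π_t(a|s) − γ Σ_{s'} T(s'|s,a) ν_{t+1}(s') + ν_t(s)` is injective
on the set of `ν` with `ν_H ≡ 0`; consequently the set of time-varying rewards
(on `{0,…,H−1}`) whose soft-optimal policy equals `π` is infinite. -/
theorem stmt4 {S A : Type*} [Fintype S] [Fintype A] [Nonempty S] [Nonempty A]
    (T : S → A → S → ℝ) (γ : ℝ) (H : ℕ)
    (hT : ∀ s a s', 0 ≤ T s a s') (hTsum : ∀ s a, ∑ s' : S, T s a s' = 1)
    (hγ0 : 0 ≤ γ) (hγ1 : γ ≤ 1) (hH : 1 ≤ H)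
    (π : ℕ → S → A → ℝ)
    (hπpos : ∀ t < H, ∀ s a, 0 < π t s a)
    (hπsum : ∀ t < H, ∀ s, ∑ a : A, π t s a = 1) :
    (∀ ν ν' : ℕ → S → ℝ, (∀ s, ν H s = 0) → (∀ s, ν' H s = 0) →
      (∀ t < H, ∀ s a,
        Real.log (π t s a) - γ * (∑ s' : S, T s a s' * ν (t + 1) s') + ν t s =
        Real.log (π t s a) - γ * (∑ s' : S, T s a s' * ν' (t + 1) s') + ν' t s) →
      ∀ t ≤ H, ∀ s, ν t s = ν' t s) ∧
    Set.Infinite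
      ((fun r : ℕ → S → A → ℝ => fun t : Fin H => r t) ''
        {r | ∀ t < H, ∀ s a, softPolicy T γ H r t s a = π t s a}) :=
  stmt4_general T γ H hH π hπpos hπsum
end
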